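/- Let n ≥ 1 and define ν_t(r) = e^{t n²/2} · (L̃^n G_t)(r), where G_t(r) = e^{−r²/(2t)}/√(2πt) and L̃ is the n-fold iterated operator (L̃g)(r) = −(1/(2π))·g′(r)/sin r. Then ν satisfies the radial spherical heat equation: for every t > 0 and every r ∈ ℝ with sin r ≠ 0, ∂ν_t/∂t (r) = (1/2)·( ν_t″(r) + 2n·(cos r/sin r)·ν_t′(r) ). -/

import Mathlib

/-- The operator `L̃` given by `(L̃ g)(r) = -(1/(2π)) g'(r)/sin r`. -/
noncomputable def Lsph (g : ℝ → ℂ) : ℝ → ℂ :=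
  fun r => -(1 / (2 * (Real.pi : ℂ))) * deriv g r / (Real.sin r : ℂ)

/-- The unwrapped heat kernel of `S^{2n+1}`, `ν_t(r) = e^{tn²/2} (L̃ⁿ G_t)(r)`, where
`G_t(r) = e^{-r²/(2t)}/√(2πt)` is the one-dimensional Euclidean heat kernel. -/
noncomputable def nuSph (n : ℕ) (t : ℝ) : ℝ → ℂ :=
  fun r => (Real.exp (t * (n : ℝ) ^ 2 / 2) : ℂ) *
    Lsph^[n] (fun s => ((Real.exp (-(s ^ 2) / (2 * t)) / Real.sqrt (2 * Real.pi * t) : ℝ) : ℂ)) r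

/-!
Write `R_α f = f'' + 2α cot · f'`, so that `R_n` is the radial Laplacian of `S^{2n+1}`. Dividing
`d/dr` by `sin r` raises the dimension by two: `R_{α+1} L̃ = L̃ R_α + (2α + 1) L̃`. Hence, if `F`
solves `∂_t F = ½ R_α F`, then `e^{t(2α+1)/2} L̃ F` solves `∂_t = ½ R_{α+1}`, because `L̃` commutes
with `∂_t`. As `(n+1)² - n² = 2n + 1`, the factors `e^{tn²/2}` in `ν` are exactly the ones produced
by this step, starting from the heat kernel of the line.
-/

open Function Filter Topology
open scoped ContDiff

section PartialDerivatives

variable {𝕜 E : Type*} [NontriviallyNormedField 𝕜] [NormedAddCommGroup E] [NormedSpace 𝕜 E]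
  {F : 𝕜 → 𝕜 → E} {x y : 𝕜} {m n : WithTop ℕ∞}

lemma hasDerivAt_left_of_uncurry (hF : DifferentiableAt 𝕜 (uncurry F) (x, y)) :
    HasDerivAt (fun u => F u y) (fderiv 𝕜 (uncurry F) (x, y) (1, 0)) x :=
  HasFDerivAt.comp_hasDerivAt (f := fun u => (u, y)) x hF.hasFDerivAt
    ((hasDerivAt_id x).prodMk (hasDerivAt_const x y))

lemma hasDerivAt_right_of_uncurry (hF : DifferentiableAt 𝕜 (uncurry F) (x, y)) :
    HasDerivAt (F x) (fderiv 𝕜 (uncurry F) (x, y) (0, 1)) y :=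
  HasFDerivAt.comp_hasDerivAt (f := fun v => (x, v)) y hF.hasFDerivAt
    ((hasDerivAt_const y x).prodMk (hasDerivAt_id y))

lemma contDiffAt_right_of_uncurry (hF : ContDiffAt 𝕜 n (uncurry F) (x, y)) :
    ContDiffAt 𝕜 n (F x) y :=
  hF.comp y (contDiff_prodMk_right x).contDiffAt

lemma contDiffAt_uncurry_deriv (hF : ContDiffAt 𝕜 n (uncurry F) (x, y)) (hmn : m + 1 ≤ n) :
    ContDiffAt 𝕜 m (uncurry fun u => deriv (F u)) (x, y) := by
  have hpair : ContDiffAt 𝕜 n (uncurry fun p : 𝕜 × 𝕜 => F p.1) ((x, y), y) :=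
    hF.comp ((x, y), y) (f := fun q : (𝕜 × 𝕜) × 𝕜 => (q.1.1, q.2)) (by fun_prop)
  exact (hpair.fderiv contDiffAt_snd hmn).clm_apply contDiffAt_const

lemma deriv_deriv_comm_of_contDiffAt [IsRCLikeNormedField 𝕜]
    (hF : ContDiffAt 𝕜 2 (uncurry F) (x, y)) :
    deriv (fun u => deriv (F u) y) x = deriv (fun v => deriv (fun u => F u v) x) y := by
  have hdiff : ∀ᶠ p in 𝓝 (x, y), DifferentiableAt 𝕜 (uncurry F) p :=
    (hF.eventually (by simp)).mono fun p hp => hp.differentiableAt (by simp)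
  have hfderiv : DifferentiableAt 𝕜 (fderiv 𝕜 (uncurry F)) (x, y) :=
    (hF.fderiv_right (m := 1) (by norm_num)).differentiableAt (by simp)
  have hright : (fun u => deriv (F u) y) =ᶠ[𝓝 x]
      fun u => fderiv 𝕜 (uncurry F) (u, y) (0, 1) :=
    ((Continuous.prodMk_left y).continuousAt.eventually hdiff).mono
      fun u hu => (hasDerivAt_right_of_uncurry hu).deriv
  have hleft : (fun v => deriv (fun u => F u v) x) =ᶠ[𝓝 y]
      fun v => fderiv 𝕜 (uncurry F) (x, v) (1, 0) :=
    ((Continuous.prodMk_right x).continuousAt.eventually hdiff).mono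
      fun v hv => (hasDerivAt_left_of_uncurry hv).deriv
  have hsymm : IsSymmSndFDerivAt 𝕜 (uncurry F) (x, y) := hF.isSymmSndFDerivAt (by simp)
  have hfderiv_left := hasDerivAt_left_of_uncurry
    (F := fun u v => fderiv 𝕜 (uncurry F) (u, v)) hfderiv
  have hfderiv_right := hasDerivAt_right_of_uncurry
    (F := fun u v => fderiv 𝕜 (uncurry F) (u, v)) hfderiv
  rw [hright.deriv_eq, hleft.deriv_eq,
    (hfderiv_left.clm_apply (hasDerivAt_const x (0, 1))).deriv,
    (hfderiv_right.clm_apply (hasDerivAt_const y (1, 0))).deriv]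
  simpa using! hsymm (1, 0) (0, 1)

end PartialDerivatives

section Lsph

variable {f g : ℝ → ℂ} {F : ℝ → ℝ → ℂ} {t r : ℝ} {m n : WithTop ℕ∞}

lemma hasDerivAt_ofReal_sin (r : ℝ) :
    HasDerivAt (fun s : ℝ => (Real.sin s : ℂ)) (Real.cos r : ℂ) r :=
  (Real.hasDerivAt_sin r).ofReal_comp

lemma hasDerivAt_ofReal_cos (r : ℝ) :
    HasDerivAt (fun s : ℝ => (Real.cos s : ℂ)) (-Real.sin r : ℂ) r := by
  simpa only [Complex.ofReal_neg] using (Real.hasDerivAt_cos r).ofReal_comp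

lemma eventually_sin_ne_zero (hr : Real.sin r ≠ 0) : ∀ᶠ s in 𝓝 r, Real.sin s ≠ 0 :=
  Real.continuous_sin.continuousAt.eventually_ne hr

lemma Lsph_congr (hfg : f =ᶠ[𝓝 r] g) : Lsph f r = Lsph g r := by
  simp only [Lsph, hfg.deriv_eq]

lemma Lsph_const_mul (c : ℂ) (f : ℝ → ℂ) (r : ℝ) : Lsph (fun s => c * f s) r = c * Lsph f r := by
  simp only [Lsph, deriv_const_mul_field]
  ring

lemma contDiffAt_uncurry_Lsph (hF : ContDiffAt ℝ n (uncurry F) (t, r)) (hmn : m + 1 ≤ n)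
    (hr : Real.sin r ≠ 0) : ContDiffAt ℝ m (uncurry fun u => Lsph (F u)) (t, r) := by
  have hsin : ContDiffAt ℝ m (fun p : ℝ × ℝ => (Real.sin p.2 : ℂ)) (t, r) :=
    Complex.ofRealCLM.contDiff.contDiffAt.comp (t, r)
      (Real.contDiff_sin.comp contDiff_snd).contDiffAt
  have hinv : ContDiffAt ℝ m (fun p : ℝ × ℝ => (Real.sin p.2 : ℂ)⁻¹) (t, r) :=
    hsin.inv (Complex.ofReal_ne_zero.2 hr)
  exact (contDiffAt_const.mul (contDiffAt_uncurry_deriv hF hmn)).mul hinv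

lemma contDiffAt_Lsph (hf : ContDiffAt ℝ n f r) (hmn : m + 1 ≤ n) (hr : Real.sin r ≠ 0) :
    ContDiffAt ℝ m (Lsph f) r :=
  contDiffAt_right_of_uncurry (x := (0 : ℝ)) <|
    contDiffAt_uncurry_Lsph (F := fun _ => f) (hf.comp (0, r) contDiffAt_snd) hmn hr

lemma deriv_Lsph_param (hF : ContDiffAt ℝ 2 (uncurry F) (t, r)) :
    deriv (fun u => Lsph (F u) r) t = Lsph (fun s => deriv (fun u => F u s) t) r := by
  simp only [Lsph, deriv_div_const, deriv_const_mul_field, deriv_deriv_comm_of_contDiffAt hF]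

lemma deriv_eq_sin_mul_Lsph (f : ℝ → ℂ) (hr : Real.sin r ≠ 0) :
    deriv f r = -(2 * Real.pi) * (Real.sin r * Lsph f r) := by
  have hsin : (Real.sin r : ℂ) ≠ 0 := Complex.ofReal_ne_zero.2 hr
  have hpi : (Real.pi : ℂ) ≠ 0 := Complex.ofReal_ne_zero.2 Real.pi_ne_zero
  simp only [Lsph]
  field_simp

lemma deriv_deriv_eq_Lsph (hf : ContDiffAt ℝ 2 f r) (hr : Real.sin r ≠ 0) :
    deriv (deriv f) r
      = -(2 * Real.pi) * (Real.cos r * Lsph f r + Real.sin r * deriv (Lsph f) r) := by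
  have hL : DifferentiableAt ℝ (Lsph f) r :=
    (contDiffAt_Lsph (m := 1) hf (by norm_num) hr).differentiableAt (by simp)
  have hderiv : deriv f =ᶠ[𝓝 r] fun s => -(2 * Real.pi) * (Real.sin s * Lsph f s) :=
    (eventually_sin_ne_zero hr).mono fun s hs => deriv_eq_sin_mul_Lsph f hs
  rw [hderiv.deriv_eq]
  exact (((hasDerivAt_ofReal_sin r).mul hL.hasDerivAt).const_mul _).deriv

lemma deriv_deriv_deriv_eq_Lsph (hf : ContDiffAt ℝ 3 f r) (hr : Real.sin r ≠ 0) :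
    deriv (deriv (deriv f)) r
      = -(2 * Real.pi) * (-Real.sin r * Lsph f r + 2 * Real.cos r * deriv (Lsph f) r
          + Real.sin r * deriv (deriv (Lsph f)) r) := by
  have hL : ContDiffAt ℝ 2 (Lsph f) r := contDiffAt_Lsph hf (by norm_num) hr
  have hL₀ := (hL.differentiableAt (by simp)).hasDerivAt
  have hL₁ := ((hL.derivWithin (m := 1) (by norm_num)).differentiableAt (by simp)).hasDerivAt
  have hderiv : deriv (deriv f) =ᶠ[𝓝 r] fun s =>
      -(2 * Real.pi) * (Real.cos s * Lsph f s + Real.sin s * deriv (Lsph f) s) := by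
    filter_upwards [eventually_sin_ne_zero hr, hf.eventually (by simp)] with s hs hfs
    exact deriv_deriv_eq_Lsph (hfs.of_le (by norm_num)) hs
  rw [hderiv.deriv_eq, ((((hasDerivAt_ofReal_cos r).fun_mul hL₀).fun_add
    ((hasDerivAt_ofReal_sin r).fun_mul hL₁)).const_mul _).deriv]
  ring

end Lsph

section RadialLaplacian

variable {f : ℝ → ℂ} {F : ℝ → ℝ → ℂ} {t r : ℝ}

/-- The radial part of the Laplacian on `S^{2α+1}`, with the dimension parameter `α` allowed to be
any complex number. Where `sin r = 0` the first-order term is `0`, by the division convention. -/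
noncomputable def radialLaplacian (α : ℂ) (f : ℝ → ℂ) (r : ℝ) : ℂ :=
  deriv (deriv f) r + 2 * α * ((Real.cos r : ℂ) / (Real.sin r : ℂ)) * deriv f r

lemma radialLaplacian_const_mul (α c : ℂ) (f : ℝ → ℂ) (r : ℝ) :
    radialLaplacian α (fun s => c * f s) r = c * radialLaplacian α f r := by
  have hderiv : deriv (fun s => c * f s) = fun s => c * deriv f s :=
    funext fun s => deriv_const_mul_field c
  simp only [radialLaplacian, hderiv, deriv_const_mul_field]
  ring

lemma deriv_radialLaplacian (α : ℂ) (hf : ContDiffAt ℝ 3 f r) (hr : Real.sin r ≠ 0) :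
    deriv (radialLaplacian α f) r = deriv (deriv (deriv f)) r
      + 2 * α * ((Real.cos r : ℂ) / (Real.sin r : ℂ)) * deriv (deriv f) r
      - 2 * α / (Real.sin r : ℂ) ^ 2 * deriv f r := by
  have hsin : (Real.sin r : ℂ) ≠ 0 := Complex.ofReal_ne_zero.2 hr
  have hpyth : (Real.sin r : ℂ) ^ 2 + (Real.cos r : ℂ) ^ 2 = 1 := mod_cast Real.sin_sq_add_cos_sq r
  have hf₁ : ContDiffAt ℝ 2 (deriv f) r := hf.derivWithin (by norm_num)
  have hd₁ := (hf₁.differentiableAt (by simp)).hasDerivAt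
  have hd₂ := ((hf₁.derivWithin (m := 1) (by norm_num)).differentiableAt (by simp)).hasDerivAt
  have hcot := ((hasDerivAt_ofReal_cos r).div (hasDerivAt_ofReal_sin r) hsin).const_mul (2 * α)
  rw [show deriv (radialLaplacian α f) r = _ from (hd₂.add (hcot.mul hd₁)).deriv]
  simp only [Pi.div_apply]
  field_simp
  linear_combination (-2 * α * deriv f r) * hpyth

lemma radialLaplacian_Lsph (α : ℂ) (hf : ContDiffAt ℝ 3 f r) (hr : Real.sin r ≠ 0) :
    radialLaplacian (α + 1) (Lsph f) r
      = Lsph (radialLaplacian α f) r + (2 * α + 1) * Lsph f r := by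
  have hsin : (Real.sin r : ℂ) ≠ 0 := Complex.ofReal_ne_zero.2 hr
  have hpi : (Real.pi : ℂ) ≠ 0 := Complex.ofReal_ne_zero.2 Real.pi_ne_zero
  have hpyth : (Real.sin r : ℂ) ^ 2 + (Real.cos r : ℂ) ^ 2 = 1 := mod_cast Real.sin_sq_add_cos_sq r
  rw [Lsph.eq_1 (radialLaplacian α f), deriv_radialLaplacian α hf hr,
    deriv_deriv_deriv_eq_Lsph hf hr, deriv_deriv_eq_Lsph (hf.of_le (by norm_num)) hr,
    deriv_eq_sin_mul_Lsph f hr, radialLaplacian]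
  field_simp
  linear_combination (-2 * α * Lsph f r) * hpyth

lemma heat_equation_exp_mul_Lsph {α : ℂ} (hF : ContDiffAt ℝ 3 (uncurry F) (t, r))
    (hr : Real.sin r ≠ 0)
    (heat : ∀ᶠ s in 𝓝 r, deriv (fun u => F u s) t = 1 / 2 * radialLaplacian α (F t) s) :
    deriv (fun u : ℝ => Complex.exp (u * ((2 * α + 1) / 2)) * Lsph (F u) r) t
      = 1 / 2 * radialLaplacian (α + 1)
          (fun s => Complex.exp (t * ((2 * α + 1) / 2)) * Lsph (F t) s) r := by
  have hexp : HasDerivAt (fun u : ℝ => Complex.exp (u * ((2 * α + 1) / 2)))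
      (Complex.exp (t * ((2 * α + 1) / 2)) * ((2 * α + 1) / 2)) t := by
    simpa using ((Complex.ofRealCLM.hasDerivAt (x := t)).mul_const ((2 * α + 1) / 2)).cexp
  have hL : HasDerivAt (fun u => Lsph (F u) r) (1 / 2 * Lsph (radialLaplacian α (F t)) r) t := by
    have hdiff := hasDerivAt_left_of_uncurry
      ((contDiffAt_uncurry_Lsph (m := 2) hF (by norm_num) hr).differentiableAt (by simp))
    rw [← Lsph_const_mul, ← Lsph_congr heat, ← deriv_Lsph_param (hF.of_le (by norm_num))]
    exact hdiff.differentiableAt.hasDerivAt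
  rw [(hexp.fun_mul hL).deriv, radialLaplacian_const_mul,
    radialLaplacian_Lsph α (contDiffAt_right_of_uncurry hF) hr]
  ring

end RadialLaplacian

section HeatKernel

variable {t : ℝ}

/-- The heat kernel of `½ d²/dx²` on the real line, the case `n = 0` of `nuSph`. It vanishes for
`t ≤ 0`, by the conventions for `√` and division. -/
noncomputable def heatKernel (t x : ℝ) : ℝ :=
  Real.exp (-(x ^ 2) / (2 * t)) / Real.sqrt (2 * Real.pi * t)

lemma contDiffAt_uncurry_heatKernel {n : WithTop ℕ∞} (ht : 0 < t) (x : ℝ) :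
    ContDiffAt ℝ n (uncurry heatKernel) (t, x) := by
  have hexponent : ContDiffAt ℝ n (fun p : ℝ × ℝ => -(p.2 ^ 2) / (2 * p.1)) (t, x) :=
    ContDiffAt.div (by fun_prop) (by fun_prop) (by positivity)
  have hsqrt : ContDiffAt ℝ n (fun p : ℝ × ℝ => Real.sqrt (2 * Real.pi * p.1)) (t, x) :=
    ContDiffAt.sqrt (by fun_prop) (by positivity)
  exact hexponent.exp.div hsqrt (by positivity)

lemma hasDerivAt_heatKernel (t x : ℝ) :
    HasDerivAt (heatKernel t) (-(x / t) * heatKernel t x) x := by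
  have hexponent : HasDerivAt (fun y : ℝ => -(y ^ 2) / (2 * t)) (-(x / t)) x := by
    refine (((hasDerivAt_pow 2 x).neg).div_const (2 * t)).congr_deriv ?_
    simp only [Nat.cast_ofNat, Nat.add_one_sub_one, pow_one, neg_div]
    rw [mul_div_mul_left x t two_ne_zero]
  refine (hexponent.exp.div_const (Real.sqrt (2 * Real.pi * t))).congr_deriv ?_
  rw [heatKernel]
  ring

lemma hasDerivAt_deriv_heatKernel (t x : ℝ) :
    HasDerivAt (deriv (heatKernel t)) ((x ^ 2 / t ^ 2 - 1 / t) * heatKernel t x) x := by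
  rw [funext fun y => (hasDerivAt_heatKernel t y).deriv]
  refine (((hasDerivAt_id x).div_const t).neg.mul (hasDerivAt_heatKernel t x)).congr_deriv ?_
  simp only [Pi.neg_apply, id]
  ring

lemma hasDerivAt_heatKernel_time (ht : 0 < t) (x : ℝ) :
    HasDerivAt (fun u => heatKernel u x)
      (1 / 2 * ((x ^ 2 / t ^ 2 - 1 / t) * heatKernel t x)) t := by
  have hpos : 0 < 2 * Real.pi * t := by positivity
  have hexponent : HasDerivAt (fun u : ℝ => -(x ^ 2) / (2 * u)) (x ^ 2 / (2 * t ^ 2)) t := by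
    refine ((hasDerivAt_const t (-(x ^ 2))).div ((hasDerivAt_id t).const_mul 2)
      (by simpa using ht.ne')).congr_deriv ?_
    simp only [id]
    field_simp
    ring
  have hsqrt : HasDerivAt (fun u : ℝ => Real.sqrt (2 * Real.pi * u))
      (Real.sqrt (2 * Real.pi * t) / (2 * t)) t := by
    refine (((hasDerivAt_id t).const_mul (2 * Real.pi)).sqrt hpos.ne').congr_deriv ?_
    have hsq : Real.sqrt (2 * Real.pi * t) ^ 2 = 2 * Real.pi * t := Real.sq_sqrt hpos.le
    simp only [id]
    field_simp
    linear_combination -hsq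
  refine (hexponent.exp.div hsqrt (Real.sqrt_pos.2 hpos).ne').congr_deriv ?_
  rw [heatKernel]
  field_simp

lemma heat_equation_heatKernel (ht : 0 < t) (x : ℝ) :
    deriv (fun u => (heatKernel u x : ℂ)) t
      = 1 / 2 * radialLaplacian 0 (fun y => (heatKernel t y : ℂ)) x := by
  have hderiv : deriv (fun y => (heatKernel t y : ℂ)) =
      fun y => ((deriv (heatKernel t) y : ℝ) : ℂ) :=
    funext fun y => (hasDerivAt_heatKernel t y).differentiableAt.hasDerivAt.ofReal_comp.deriv
  simp only [radialLaplacian, mul_zero, zero_mul, add_zero]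
  rw [(hasDerivAt_heatKernel_time ht x).ofReal_comp.deriv, hderiv,
    (hasDerivAt_deriv_heatKernel t x).ofReal_comp.deriv]
  push_cast
  ring

end HeatKernel

section NuSph

lemma nuSph_zero : nuSph 0 = fun t r => (heatKernel t r : ℂ) := by
  funext t r
  simp [nuSph, heatKernel]

lemma nuSph_succ (n : ℕ) :
    nuSph (n + 1) = fun (t : ℝ) r => Complex.exp (t * ((2 * n + 1) / 2)) * Lsph (nuSph n t) r := by
  funext t r
  have hexponent : (t : ℂ) * ((n + 1 : ℕ) : ℂ) ^ 2 / 2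
      = t * ((2 * n + 1) / 2) + t * (n : ℂ) ^ 2 / 2 := by
    push_cast
    ring
  unfold nuSph
  rw [Lsph_const_mul, iterate_succ_apply']
  push_cast at hexponent ⊢
  rw [hexponent, Complex.exp_add, mul_assoc]

lemma contDiffAt_uncurry_nuSph (n : ℕ) {t r : ℝ} (ht : 0 < t) (hr : Real.sin r ≠ 0) :
    ContDiffAt ℝ ∞ (uncurry (nuSph n)) (t, r) := by
  induction n with
  | zero =>
    rw [nuSph_zero]
    exact Complex.ofRealCLM.contDiff.contDiffAt.comp (t, r) (contDiffAt_uncurry_heatKernel ht r)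
  | succ n ih =>
    have hfst : ContDiffAt ℝ ∞ (fun p : ℝ × ℝ => (p.1 : ℂ)) (t, r) :=
      Complex.ofRealCLM.contDiff.contDiffAt.comp (t, r) contDiffAt_fst
    rw [nuSph_succ]
    exact (hfst.mul contDiffAt_const).cexp.mul (contDiffAt_uncurry_Lsph ih (by simp) hr)

end NuSph

/-- `ν` satisfies the radial heat equation on `S^{2n+1}`. -/
theorem stmt_5 (n : ℕ) (hn : 1 ≤ n) (t : ℝ) (ht : 0 < t) (r : ℝ) (hr : Real.sin r ≠ 0) :
    deriv (fun u : ℝ => nuSph n u r) t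
      = (1 / 2) * (deriv (deriv (nuSph n t)) r
          + 2 * (n : ℂ) * ((Real.cos r : ℂ) / (Real.sin r : ℂ)) * deriv (nuSph n t) r) := by
  change deriv (fun u => nuSph n u r) t = 1 / 2 * radialLaplacian n (nuSph n t) r
  clear hn
  induction n generalizing r with
  | zero => simpa only [nuSph_zero, Nat.cast_zero] using heat_equation_heatKernel ht r
  | succ n ih =>
    have hsmooth : ContDiffAt ℝ 3 (uncurry (nuSph n)) (t, r) :=
      (contDiffAt_uncurry_nuSph n ht hr).of_le (WithTop.coe_le_coe.2 le_top)
    rw [nuSph_succ, Nat.cast_succ]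
    exact heat_equation_exp_mul_Lsph hsmooth hr ((eventually_sin_ne_zero hr).mono ih)
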